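/- arXiv:2408.07936 — 2 statements merged into one kernel-verified Lean document; each statement's English description precedes it below -/
import Mathlib

section
/- Let b_1, …, b_l be a δ-LLL-reduced basis of a lattice in ℝ^m, let R = ‖b_1‖, and let v = Σ_{i=1}^{l} c_i b_i with integer coefficients c_i satisfy ‖v‖ < R. Then the last coefficient satisfies |c_l| < (δ − 1/4)^{1−l}. -/
open Finset
open scoped RealInnerProductSpace

/-!
Only the last basis vector `b_l` has a component along the last Gram–Schmidt vector `b̃_l`, and
that component is `b̃_l` itself. So `|c_l| ‖b̃_l‖ ≤ ‖v‖` by Cauchy–Schwarz. Size reduction turns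
the Lovász condition into Siegel's condition `(δ - 1/4) ‖b̃_i‖² ≤ ‖b̃_{i+1}‖²`, which iterates to
`(δ - 1/4)^(l-1) ‖b_1‖² ≤ ‖b̃_l‖²`. Together with `‖v‖ < ‖b_1‖` this gives the quadratic bound
`c_l² < (δ - 1/4)^(1-l)`, which is all that is needed, since an integer satisfies `|c| ≤ c²`.
-/

open InnerProductSpace

theorem abs_intCast_le_sq {R : Type*} [Ring R] [LinearOrder R] [IsStrictOrderedRing R] (a : ℤ) :
    |(a : R)| ≤ (a : R) ^ 2 := by
  exact_mod_cast (Int.abs_eq_natAbs a).trans_le (Int.natAbs_le_self_sq a)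

section GramSchmidt

variable {𝕜 E ι : Type*} [RCLike 𝕜] [NormedAddCommGroup E] [InnerProductSpace 𝕜 E]
  [LinearOrder ι] [LocallyFiniteOrderBot ι] [WellFoundedLT ι]

theorem eq_gramSchmidt_of_forall_eq_sub_sum {b bt : ι → E}
    (h : ∀ i, bt i = b i - ∑ j ∈ Iio i, (inner 𝕜 (bt j) (b i) / inner 𝕜 (bt j) (bt j)) • bt j) :
    bt = gramSchmidt 𝕜 b := by
  funext i
  induction i using WellFoundedLT.induction with
  | ind i ih =>
    rw [h, gramSchmidt_def]
    congr 1
    refine sum_congr rfl fun j hj => ?_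
    rw [← ih j (mem_Iio.mp hj), Submodule.starProjection_singleton, inner_self_eq_norm_sq_to_K,
      RCLike.ofReal_pow]

theorem inner_gramSchmidt_self_right (b : ι → E) (i : ι) :
    inner 𝕜 (gramSchmidt 𝕜 b i) (b i) = (‖gramSchmidt 𝕜 b i‖ : 𝕜) ^ 2 := by
  have horth : ∀ j ∈ Iio i, inner 𝕜 (gramSchmidt 𝕜 b i)
      ((inner 𝕜 (gramSchmidt 𝕜 b j) (b i) / (‖gramSchmidt 𝕜 b j‖ : 𝕜) ^ 2) •
        gramSchmidt 𝕜 b j) = 0 := fun j hj => by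
    rw [inner_smul_right, gramSchmidt_orthogonal 𝕜 b (mem_Iio.mp hj).ne', mul_zero]
  conv_lhs => rw [gramSchmidt_def'' 𝕜 b i]
  rw [inner_add_right, inner_sum, sum_eq_zero horth, add_zero, inner_self_eq_norm_sq_to_K]

theorem inner_gramSchmidt_sum_Iic (b : ι → E) (c : ι → 𝕜) (k : ι) :
    inner 𝕜 (gramSchmidt 𝕜 b k) (∑ i ∈ Iic k, c i • b i) =
      c k * (‖gramSchmidt 𝕜 b k‖ : 𝕜) ^ 2 := by
  rw [inner_sum, sum_eq_single_of_mem k (mem_Iic.mpr le_rfl), inner_smul_right,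
    inner_gramSchmidt_self_right]
  intro i hi hik
  rw [inner_smul_right, gramSchmidt_inv_triangular 𝕜 b ((mem_Iic.mp hi).lt_of_ne hik), mul_zero]

theorem norm_coeff_mul_norm_gramSchmidt_le (b : ι → E) (c : ι → 𝕜) (k : ι) :
    ‖c k‖ * ‖gramSchmidt 𝕜 b k‖ ≤ ‖∑ i ∈ Iic k, c i • b i‖ := by
  rcases (norm_nonneg (gramSchmidt 𝕜 b k)).eq_or_lt with h | hpos
  · rw [← h, mul_zero]
    exact norm_nonneg _
  · refine le_of_mul_le_mul_left ?_ hpos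
    calc ‖gramSchmidt 𝕜 b k‖ * (‖c k‖ * ‖gramSchmidt 𝕜 b k‖)
        = ‖inner 𝕜 (gramSchmidt 𝕜 b k) (∑ i ∈ Iic k, c i • b i)‖ := by
          rw [inner_gramSchmidt_sum_Iic, norm_mul, norm_pow, RCLike.norm_ofReal, abs_norm]
          ring
      _ ≤ ‖gramSchmidt 𝕜 b k‖ * ‖∑ i ∈ Iic k, c i • b i‖ := norm_inner_le_norm _ _

end GramSchmidt

section Siegel

variable {E : Type*} [NormedAddCommGroup E] [InnerProductSpace ℝ E] {n : ℕ}

/-- Siegel's condition with parameter `α`: each squared Gram–Schmidt norm is at least `α` times the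
preceding one. It is the consequence of LLL-reducedness, with `α = δ - 1 / 4`, through which the
lengths of the Gram–Schmidt vectors are compared. -/
def IsSiegelReduced (α : ℝ) (b : Fin (n + 1) → E) : Prop :=
  ∀ i : Fin n, α * ‖gramSchmidt ℝ b i.castSucc‖ ^ 2 ≤ ‖gramSchmidt ℝ b i.succ‖ ^ 2

namespace IsSiegelReduced

variable {α : ℝ} {b : Fin (n + 1) → E}

theorem pow_mul_norm_sq_le (hb : IsSiegelReduced α b) (hα : 0 ≤ α) (k : Fin (n + 1)) :
    α ^ (k : ℕ) * ‖b 0‖ ^ 2 ≤ ‖gramSchmidt ℝ b k‖ ^ 2 := by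
  induction k using Fin.induction with
  | zero =>
    have hzero : gramSchmidt ℝ b 0 = b 0 := gramSchmidt_bot ℝ b
    rw [hzero, Fin.val_zero, pow_zero, one_mul]
  | succ i ih =>
    calc α ^ (i.succ : ℕ) * ‖b 0‖ ^ 2
        = α * (α ^ (i.castSucc : ℕ) * ‖b 0‖ ^ 2) := by
          rw [Fin.val_succ, Fin.val_castSucc, pow_succ', mul_assoc]
      _ ≤ α * ‖gramSchmidt ℝ b i.castSucc‖ ^ 2 := by gcongr
      _ ≤ ‖gramSchmidt ℝ b i.succ‖ ^ 2 := hb i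

theorem sq_last_coeff_lt (hb : IsSiegelReduced α b) (hα : 0 < α) {c : Fin (n + 1) → ℝ}
    (hc : ‖∑ i, c i • b i‖ < ‖b 0‖) : c (Fin.last n) ^ 2 < (α ^ n)⁻¹ := by
  have hlast : |c (Fin.last n)| * ‖gramSchmidt ℝ b (Fin.last n)‖ ≤ ‖∑ i, c i • b i‖ := by
    simpa only [Real.norm_eq_abs, ← Fin.top_eq_last, Iic_top] using
      norm_coeff_mul_norm_gramSchmidt_le b c (Fin.last n)
  have hscaled : c (Fin.last n) ^ 2 * α ^ n * ‖b 0‖ ^ 2 < 1 * ‖b 0‖ ^ 2 :=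
    calc c (Fin.last n) ^ 2 * α ^ n * ‖b 0‖ ^ 2
        = c (Fin.last n) ^ 2 * (α ^ (Fin.last n : ℕ) * ‖b 0‖ ^ 2) := by
          rw [Fin.val_last, mul_assoc]
      _ ≤ c (Fin.last n) ^ 2 * ‖gramSchmidt ℝ b (Fin.last n)‖ ^ 2 := by
          gcongr
          exact hb.pow_mul_norm_sq_le hα.le _
      _ = (|c (Fin.last n)| * ‖gramSchmidt ℝ b (Fin.last n)‖) ^ 2 := by rw [mul_pow, sq_abs]
      _ < ‖b 0‖ ^ 2 := by gcongr; exact hlast.trans_lt hc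
      _ = 1 * ‖b 0‖ ^ 2 := (one_mul _).symm
  rw [← one_div, lt_div_iff₀ (pow_pos hα n)]
  exact lt_of_mul_lt_mul_right hscaled (sq_nonneg _)

end IsSiegelReduced

end Siegel

theorem lll_last_coefficient_bound_general {E : Type*} [NormedAddCommGroup E]
    [InnerProductSpace ℝ E] {l : ℕ} (hl : 1 ≤ l) {δ : ℝ} (hδ : 1 / 4 < δ)
    {b bt : Fin l → E} {μ : Fin l → Fin l → ℝ}
    (hμ : ∀ i j : Fin l, j < i → μ j i = ⟪b i, bt j⟫ / ⟪bt j, bt j⟫)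
    (hbt : ∀ i : Fin l, bt i = b i - ∑ j ∈ Finset.Iio i, μ j i • bt j)
    (hsize : ∀ (i : Fin l) (h : (i : ℕ) + 1 < l), |μ i ⟨(i : ℕ) + 1, h⟩| ≤ 1 / 2)
    (hLovasz : ∀ (i : Fin l) (h : (i : ℕ) + 1 < l),
      ‖bt ⟨(i : ℕ) + 1, h⟩‖ ^ 2 ≥ (δ - (μ i ⟨(i : ℕ) + 1, h⟩) ^ 2) * ‖bt i‖ ^ 2)
    {c : Fin l → ℝ} (hc : ‖∑ i, c i • b i‖ < ‖b ⟨0, hl⟩‖) :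
    c ⟨l - 1, by omega⟩ ^ 2 < (δ - 1 / 4) ^ ((1 : ℤ) - (l : ℤ)) := by
  obtain ⟨n, rfl⟩ := Nat.exists_eq_add_of_le' hl
  have hgs : bt = gramSchmidt ℝ b := eq_gramSchmidt_of_forall_eq_sub_sum (𝕜 := ℝ) fun i => by
    rw [hbt i]
    congr 1
    refine sum_congr rfl fun j hj => ?_
    rw [hμ i j (mem_Iio.mp hj), real_inner_comm]
  have hsiegel : IsSiegelReduced (δ - 1 / 4) b := fun i => by
    have hμ_sq : μ i.castSucc i.succ ^ 2 ≤ 1 / 4 :=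
      calc μ i.castSucc i.succ ^ 2 = |μ i.castSucc i.succ| ^ 2 := (sq_abs _).symm
        _ ≤ (1 / 2) ^ 2 := by gcongr; exact hsize i.castSucc i.succ.isLt
        _ = 1 / 4 := by norm_num
    rw [← hgs]
    calc (δ - 1 / 4) * ‖bt i.castSucc‖ ^ 2
        ≤ (δ - μ i.castSucc i.succ ^ 2) * ‖bt i.castSucc‖ ^ 2 := by gcongr
      _ ≤ ‖bt i.succ‖ ^ 2 := hLovasz i.castSucc i.succ.isLt
  have hexp : (1 : ℤ) - ((n + 1 : ℕ) : ℤ) = -(n : ℤ) := by omega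
  rw [hexp, zpow_neg, zpow_natCast]
  exact hsiegel.sq_last_coeff_lt (sub_pos.mpr hδ) hc

/-- For a δ-LLL-reduced basis `b_1, …, b_l`, `R = ‖b_1‖`, and a lattice
vector `v = Σ c_i b_i` with integer coefficients and `‖v‖ < R`, the last coefficient
satisfies `|c_l| < (δ − 1/4)^(1−l)`. -/
theorem lll_last_coefficient_bound
    (m l : ℕ) (hl : 1 ≤ l) (hlm : l ≤ m) (δ : ℝ) (hδ : 1/4 < δ ∧ δ < 1)
    (b bt : Fin l → EuclideanSpace ℝ (Fin m))
    (μ : Fin l → Fin l → ℝ)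
    (hind : LinearIndependent ℝ b)
    (hμ : ∀ i j : Fin l, j < i → μ j i = ⟪b i, bt j⟫ / ⟪bt j, bt j⟫)
    (hbt : ∀ i : Fin l, bt i = b i - ∑ j ∈ Finset.Iio i, μ j i • bt j)
    (hsize : ∀ i j : Fin l, j < i → |μ j i| ≤ 1/2)
    (hLovasz : ∀ (i : Fin l) (h : (i : ℕ) + 1 < l),
      ‖bt ⟨(i : ℕ) + 1, h⟩‖ ^ 2 ≥ (δ - (μ i ⟨(i : ℕ) + 1, h⟩) ^ 2) * ‖bt i‖ ^ 2)
    (R : ℝ) (hR : R = ‖b ⟨0, hl⟩‖)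
    (c : Fin l → ℤ) (v : EuclideanSpace ℝ (Fin m))
    (hv : v = ∑ i, (c i : ℝ) • b i)
    (hvR : ‖v‖ < R) :
    |(c ⟨l - 1, by omega⟩ : ℝ)| < (δ - 1/4) ^ ((1 : ℤ) - (l : ℤ)) := by
  subst hR hv
  exact (abs_intCast_le_sq _).trans_lt <| lll_last_coefficient_bound_general hl hδ.1 hμ hbt
    (fun i h => hsize _ i (Nat.lt_succ_self _)) hLovasz hvR
end

section
/- Let b_1, …, b_l be a δ-LLL-reduced basis of a lattice in ℝ^m, let R = ‖b_1‖, and define γ_l = (δ − 1/4)^{1−l} and recursively γ_{l−i} = (δ − 1/4)^{1+i−l} + (1/2)·Σ_{k=0}^{i−1} γ_{l−k} for i = 1, …, l−1. Then every lattice vector v = Σ_{i=1}^{l} c_i b_i with integer coefficients c_i and ‖v‖ < R satisfies |c_{l−i}| ≤ γ_{l−i} for all i = 0, 1, …, l−1. -/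
open Finset
open scoped RealInnerProductSpace

/-!
Pairing `v = ∑ i, c i • b i` with the Gram–Schmidt vector `b̃ k` isolates the coefficients from `k`
on: `⟪v, b̃ k⟫ / ‖b̃ k‖ ^ 2 = c k + ∑ i > k, c i * μ k i`. By Cauchy–Schwarz and size-reduction,
`|c k| ≤ ‖v‖ / ‖b̃ k‖ + 1 / 2 * ∑ i > k, |c i|`. The Lovász condition forces
`(δ - 1 / 4) ^ k * ‖b 0‖ ≤ ‖b̃ k‖`, so the first term is at most `(δ - 1 / 4) ^ (-k)` as soon as
`‖v‖ ≤ ‖b 0‖`. The sequence `γ` solves the resulting recursive inequality with equality.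
-/

section Comparison

theorem le_of_le_add_mul_sum_Ioi {ι : Type*} [Preorder ι] [LocallyFiniteOrderTop ι]
    [WellFoundedGT ι] {x y g : ι → ℝ} {η : ℝ} (hη : 0 ≤ η)
    (hx : ∀ k, x k ≤ g k + η * ∑ i ∈ Ioi k, x i)
    (hy : ∀ k, g k + η * ∑ i ∈ Ioi k, y i ≤ y k) (k : ι) : x k ≤ y k := by
  induction k using WellFoundedGT.induction with
  | ind k ih =>
    calc x k ≤ g k + η * ∑ i ∈ Ioi k, x i := hx k
      _ ≤ g k + η * ∑ i ∈ Ioi k, y i := by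
        gcongr with i hi
        exact ih i (mem_Ioi.mp hi)
      _ ≤ y k := hy k

theorem sum_Ioi_comp_rev {M : Type*} [AddCommMonoid M] {l : ℕ} (f : ℕ → M) (k : Fin l) :
    ∑ i ∈ Ioi k, f i.rev = ∑ j ∈ range k.rev, f j := by
  rw [← Nat.Iio_eq_range, ← Fin.map_valEmbedding_Iio, ← Fin.map_revPerm_Ioi, sum_map, sum_map]
  rfl

end Comparison

section GramSchmidt

open InnerProductSpace (gramSchmidt)

variable {E : Type*} [NormedAddCommGroup E] [InnerProductSpace ℝ E]
  {ι : Type*} [LinearOrder ι] [LocallyFiniteOrderBot ι] [WellFoundedLT ι]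

theorem eq_gramSchmidt_of_recursion {b bt : ι → E} {μ : ι → ι → ℝ}
    (hμ : ∀ i j, j < i → μ j i = ⟪b i, bt j⟫ / ⟪bt j, bt j⟫)
    (hbt : ∀ i, bt i = b i - ∑ j ∈ Iio i, μ j i • bt j) :
    bt = gramSchmidt ℝ b := by
  funext i
  induction i using WellFoundedLT.induction with
  | ind i ih =>
    rw [hbt, InnerProductSpace.gramSchmidt_def]
    congr 1
    refine sum_congr rfl fun j hj => ?_
    have hji : j < i := mem_Iio.mp hj
    rw [Submodule.starProjection_singleton, hμ i j hji, ih j hji, real_inner_comm,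
      real_inner_self_eq_norm_sq]
    rfl

/-- The Gram–Schmidt coefficient `μ_{j,i}` of `b i` along the `j`-th Gram–Schmidt vector. It is
defined for every pair `j`, `i`, not only for `j < i`, and is `0` when the `j`-th Gram–Schmidt
vector vanishes. -/
noncomputable def gramSchmidtCoeff (b : ι → E) (j i : ι) : ℝ :=
  ⟪b i, gramSchmidt ℝ b j⟫ / ⟪gramSchmidt ℝ b j, gramSchmidt ℝ b j⟫

theorem gramSchmidtCoeff_of_lt (b : ι → E) {i k : ι} (hik : i < k) :
    gramSchmidtCoeff b k i = 0 := by
  rw [gramSchmidtCoeff, real_inner_comm, InnerProductSpace.gramSchmidt_inv_triangular ℝ b hik,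
    zero_div]

theorem gramSchmidtCoeff_self {b : ι → E} {k : ι} (hk : gramSchmidt ℝ b k ≠ 0) :
    gramSchmidtCoeff b k k = 1 := by
  have inner_self : ⟪b k, gramSchmidt ℝ b k⟫ = ⟪gramSchmidt ℝ b k, gramSchmidt ℝ b k⟫ := by
    nth_rewrite 1 [InnerProductSpace.gramSchmidt_def'' ℝ b k]
    rw [inner_add_left, sum_inner, add_eq_left]
    refine sum_eq_zero fun j hj => ?_
    rw [real_inner_smul_left,
      InnerProductSpace.gramSchmidt_orthogonal ℝ b (mem_Iio.mp hj).ne, mul_zero]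
  rw [gramSchmidtCoeff, inner_self, div_self (inner_self_ne_zero.mpr hk)]

variable [Fintype ι] [LocallyFiniteOrderTop ι]

theorem inner_sum_smul_gramSchmidt_div {b : ι → E} {k : ι} (hk : gramSchmidt ℝ b k ≠ 0)
    (c : ι → ℝ) :
    ⟪∑ i, c i • b i, gramSchmidt ℝ b k⟫ / ⟪gramSchmidt ℝ b k, gramSchmidt ℝ b k⟫ =
      c k + ∑ i ∈ Ioi k, c i * gramSchmidtCoeff b k i := by
  calc
    _ = ∑ i, c i * gramSchmidtCoeff b k i := by
      simp only [sum_inner, real_inner_smul_left, sum_div, mul_div_assoc, gramSchmidtCoeff]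
    _ = ∑ i ∈ Ici k, c i * gramSchmidtCoeff b k i := by
      refine (sum_subset (subset_univ _) fun i _ hi => ?_).symm
      rw [gramSchmidtCoeff_of_lt b (not_le.mp (mt mem_Ici.mpr hi)), mul_zero]
    _ = c k + ∑ i ∈ Ioi k, c i * gramSchmidtCoeff b k i := by
      rw [← Ioi_insert, sum_insert (by simp), gramSchmidtCoeff_self hk, mul_one]

theorem abs_le_norm_sum_smul_div_add_mul_sum_Ioi {b : ι → E} {k : ι} {η : ℝ}
    (hk : gramSchmidt ℝ b k ≠ 0) (hη : ∀ i, k < i → |gramSchmidtCoeff b k i| ≤ η) (c : ι → ℝ) :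
    |c k| ≤ ‖∑ i, c i • b i‖ / ‖gramSchmidt ℝ b k‖ + η * ∑ i ∈ Ioi k, |c i| := by
  set v := ∑ i, c i • b i
  set q := ⟪v, gramSchmidt ℝ b k⟫ / ⟪gramSchmidt ℝ b k, gramSchmidt ℝ b k⟫
  set s := ∑ i ∈ Ioi k, c i * gramSchmidtCoeff b k i
  have c_eq : c k = q - s := eq_sub_of_add_eq (inner_sum_smul_gramSchmidt_div hk c).symm
  have abs_q_le : |q| ≤ ‖v‖ / ‖gramSchmidt ℝ b k‖ := by
    have norm_pos : 0 < ‖gramSchmidt ℝ b k‖ := norm_pos_iff.mpr hk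
    rw [abs_div, real_inner_self_eq_norm_mul_norm, abs_mul_self, ← div_div]
    gcongr
    exact (div_le_iff₀ norm_pos).mpr (abs_real_inner_le_norm _ _)
  have abs_s_le : |s| ≤ η * ∑ i ∈ Ioi k, |c i| := by
    rw [mul_sum]
    refine (abs_sum_le_sum_abs _ _).trans (sum_le_sum fun i hi => ?_)
    rw [abs_mul, mul_comm]
    gcongr
    exact hη i (mem_Ioi.mp hi)
  calc |c k| = |q - s| := by rw [c_eq]
    _ ≤ |q| + |s| := abs_sub q s
    _ ≤ _ := add_le_add abs_q_le abs_s_le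

end GramSchmidt

section LLL

open InnerProductSpace (gramSchmidt)

variable {E : Type*} [NormedAddCommGroup E] [InnerProductSpace ℝ E] {l : ℕ} {δ : ℝ} {b : Fin l → E}

/-- A family of vectors is `δ`-LLL-reduced if it is size-reduced and satisfies the Lovász condition
with parameter `δ`. Linear independence is not part of the definition. -/
structure IsLLLReduced (δ : ℝ) (b : Fin l → E) : Prop where
  abs_coeff_le : ∀ i j, j < i → |gramSchmidtCoeff b j i| ≤ 1 / 2
  lovasz : ∀ (i : Fin l) (h : (i : ℕ) + 1 < l),
    (δ - gramSchmidtCoeff b i ⟨i + 1, h⟩ ^ 2) * ‖gramSchmidt ℝ b i‖ ^ 2 ≤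
      ‖gramSchmidt ℝ b ⟨i + 1, h⟩‖ ^ 2

namespace IsLLLReduced

theorem of_recursion {bt : Fin l → E} {μ : Fin l → Fin l → ℝ}
    (hμ : ∀ i j, j < i → μ j i = ⟪b i, bt j⟫ / ⟪bt j, bt j⟫)
    (hbt : ∀ i, bt i = b i - ∑ j ∈ Iio i, μ j i • bt j)
    (hsize : ∀ i j, j < i → |μ j i| ≤ 1 / 2)
    (hLovasz : ∀ (i : Fin l) (h : (i : ℕ) + 1 < l),
      (δ - μ i ⟨i + 1, h⟩ ^ 2) * ‖bt i‖ ^ 2 ≤ ‖bt ⟨i + 1, h⟩‖ ^ 2) :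
    IsLLLReduced δ b := by
  obtain rfl := eq_gramSchmidt_of_recursion hμ hbt
  have μ_eq : ∀ i j, j < i → μ j i = gramSchmidtCoeff b j i := hμ
  refine ⟨fun i j hji => μ_eq i j hji ▸ hsize i j hji, fun i h => ?_⟩
  rw [← μ_eq _ _ (Fin.lt_def.mpr (Nat.lt_succ_self i))]
  exact hLovasz i h

theorem mul_sq_norm_gramSchmidt_le (hb : IsLLLReduced δ b) (i : Fin l) (h : (i : ℕ) + 1 < l) :
    (δ - 1 / 4) * ‖gramSchmidt ℝ b i‖ ^ 2 ≤ ‖gramSchmidt ℝ b ⟨i + 1, h⟩‖ ^ 2 := by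
  have coeff_sq_le : gramSchmidtCoeff b i ⟨i + 1, h⟩ ^ 2 ≤ 1 / 4 := by
    calc gramSchmidtCoeff b i ⟨i + 1, h⟩ ^ 2 = |gramSchmidtCoeff b i ⟨i + 1, h⟩| ^ 2 :=
          (sq_abs _).symm
      _ ≤ (1 / 2) ^ 2 := by
        gcongr
        exact hb.abs_coeff_le _ _ (Fin.lt_def.mpr (Nat.lt_succ_self i))
      _ = 1 / 4 := by norm_num
  refine le_trans ?_ (hb.lovasz i h)
  gcongr

theorem pow_mul_norm_le_norm_gramSchmidt (hb : IsLLLReduced δ b) (hδ : 1 / 4 ≤ δ) (hδ' : δ ≤ 5 / 4)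
    (k : Fin l) : (δ - 1 / 4) ^ (k : ℕ) * ‖b ⟨0, k.pos⟩‖ ≤ ‖gramSchmidt ℝ b k‖ := by
  have nonneg : 0 ≤ δ - 1 / 4 := sub_nonneg.mpr hδ
  obtain ⟨n, hn⟩ := k
  induction n with
  | zero =>
    have Iio_eq_empty : Iio (⟨0, hn⟩ : Fin l) = ∅ := by ext; simp [Fin.lt_def]
    rw [pow_zero, one_mul, InnerProductSpace.gramSchmidt_def, Iio_eq_empty, sum_empty, sub_zero]
  | succ n ih =>
    set g := gramSchmidt ℝ b ⟨n, Nat.lt_of_succ_lt hn⟩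
    have mul_norm_le : (δ - 1 / 4) * ‖g‖ ≤ ‖gramSchmidt ℝ b ⟨n + 1, hn⟩‖ := by
      refine le_of_sq_le_sq ?_ (norm_nonneg _)
      calc ((δ - 1 / 4) * ‖g‖) ^ 2 = (δ - 1 / 4) * ((δ - 1 / 4) * ‖g‖ ^ 2) := by ring
        _ ≤ 1 * ((δ - 1 / 4) * ‖g‖ ^ 2) := by gcongr; linarith
        _ = (δ - 1 / 4) * ‖g‖ ^ 2 := one_mul _
        _ ≤ _ := hb.mul_sq_norm_gramSchmidt_le ⟨n, Nat.lt_of_succ_lt hn⟩ hn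
    calc (δ - 1 / 4) ^ (n + 1) * ‖b ⟨0, _⟩‖
        = (δ - 1 / 4) * ((δ - 1 / 4) ^ n * ‖b ⟨0, _⟩‖) := by ring
      _ ≤ (δ - 1 / 4) * ‖g‖ :=
        mul_le_mul_of_nonneg_left (ih _) nonneg
      _ ≤ ‖gramSchmidt ℝ b ⟨n + 1, hn⟩‖ := mul_norm_le

theorem abs_le_inv_pow_add_half_sum_Ioi (hb : IsLLLReduced δ b) (hδ : 1 / 4 < δ) (hδ' : δ ≤ 5 / 4)
    {c : Fin l → ℝ} (k : Fin l) (hb₀ : b ⟨0, k.pos⟩ ≠ 0)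
    (hc : ‖∑ i, c i • b i‖ ≤ ‖b ⟨0, k.pos⟩‖) :
    |c k| ≤ ((δ - 1 / 4) ^ (k : ℕ))⁻¹ + 1 / 2 * ∑ i ∈ Ioi k, |c i| := by
  have factor_pos : 0 < (δ - 1 / 4) ^ (k : ℕ) := pow_pos (sub_pos.mpr hδ) _
  have norm_ge := hb.pow_mul_norm_le_norm_gramSchmidt hδ.le hδ' k
  have norm_pos : 0 < ‖gramSchmidt ℝ b k‖ :=
    (mul_pos factor_pos (norm_pos_iff.mpr hb₀)).trans_le norm_ge
  refine (abs_le_norm_sum_smul_div_add_mul_sum_Ioi (norm_pos_iff.mp norm_pos)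
    (fun i => hb.abs_coeff_le i k) c).trans ?_
  gcongr
  rw [div_le_iff₀ norm_pos, le_inv_mul_iff₀ factor_pos]
  exact (mul_le_mul_of_nonneg_left hc factor_pos.le).trans norm_ge

end IsLLLReduced

theorem lll_all_coefficients_bound_general (hδ : 1 / 4 < δ) (hδ' : δ ≤ 5 / 4)
    (hb : IsLLLReduced δ b) (hl : 0 < l) (hb₀ : b ⟨0, hl⟩ ≠ 0) {γ : ℕ → ℝ}
    (hγ : ∀ i < l, γ i = (δ - 1 / 4) ^ (1 + i - l : ℤ) + 1 / 2 * ∑ j ∈ range i, γ j)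
    {c : Fin l → ℝ} (hc : ‖∑ i, c i • b i‖ ≤ ‖b ⟨0, hl⟩‖) (k : Fin l) :
    |c k| ≤ γ k.rev := by
  refine le_of_le_add_mul_sum_Ioi (x := fun k => |c k|) (y := fun k => γ k.rev)
    (by norm_num : (0 : ℝ) ≤ 1 / 2)
    (fun k => hb.abs_le_inv_pow_add_half_sum_Ioi hδ hδ' k hb₀ hc) (fun k => ?_) k
  have exponent_eq : (1 + (k.rev : ℕ) - l : ℤ) = -(k : ℕ) := by
    rw [Fin.val_rev]
    omega
  rw [sum_Ioi_comp_rev, hγ _ k.rev.isLt, exponent_eq, zpow_neg, zpow_natCast]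

end LLL

/-- For a δ-LLL-reduced basis `b_1, …, b_l`, `R = ‖b_1‖`, and the
sequence `γ` defined by `γ_l = (δ − 1/4)^(1−l)` and
`γ_{l−i} = (δ − 1/4)^(1+i−l) + (1/2)·Σ_{k=0}^{i−1} γ_{l−k}` for `i = 1, …, l−1`
(below, `γ i` stands for the paper's `γ_{l−i}`), every lattice vector `v = Σ c_i b_i`
with integer coefficients and `‖v‖ < R` satisfies `|c_{l−i}| ≤ γ_{l−i}` for all
`i = 0, 1, …, l−1`. -/
theorem lll_all_coefficients_bound
    (m l : ℕ) (hl : 1 ≤ l) (hlm : l ≤ m) (δ : ℝ) (hδ : 1/4 < δ ∧ δ < 1)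
    (b bt : Fin l → EuclideanSpace ℝ (Fin m))
    (μ : Fin l → Fin l → ℝ)
    (hind : LinearIndependent ℝ b)
    (hμ : ∀ i j : Fin l, j < i → μ j i = ⟪b i, bt j⟫ / ⟪bt j, bt j⟫)
    (hbt : ∀ i : Fin l, bt i = b i - ∑ j ∈ Finset.Iio i, μ j i • bt j)
    (hsize : ∀ i j : Fin l, j < i → |μ j i| ≤ 1/2)
    (hLovasz : ∀ (i : Fin l) (h : (i : ℕ) + 1 < l),
      ‖bt ⟨(i : ℕ) + 1, h⟩‖ ^ 2 ≥ (δ - (μ i ⟨(i : ℕ) + 1, h⟩) ^ 2) * ‖bt i‖ ^ 2)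
    (R : ℝ) (hR : R = ‖b ⟨0, by omega⟩‖)
    (γ : ℕ → ℝ)
    (hγ0 : γ 0 = (δ - 1/4) ^ ((1 : ℤ) - (l : ℤ)))
    (hγ : ∀ i : ℕ, 1 ≤ i → i ≤ l - 1 →
      γ i = (δ - 1/4) ^ ((1 : ℤ) + (i : ℤ) - (l : ℤ)) +
        (1/2) * ∑ k ∈ Finset.range i, γ k)
    (c : Fin l → ℤ) (v : EuclideanSpace ℝ (Fin m))
    (hv : v = ∑ i, (c i : ℝ) • b i)
    (hvR : ‖v‖ < R) :
    ∀ i : ℕ, ∀ h : i < l, |(c ⟨l - 1 - i, by omega⟩ : ℝ)| ≤ γ i := by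
  subst hR hv
  intro i hi
  have hred : IsLLLReduced δ b := .of_recursion hμ hbt hsize hLovasz
  have hb₀ : b ⟨0, hl⟩ ≠ 0 := hind.ne_zero _
  have hγ' : ∀ i < l, γ i = (δ - 1/4) ^ (1 + i - l : ℤ) + 1/2 * ∑ k ∈ range i, γ k
    | 0, _ => by simpa using hγ0
    | i + 1, h => hγ (i + 1) i.succ_pos (Nat.le_sub_one_of_lt h)
  have rev_eq : ((⟨l - 1 - i, by omega⟩ : Fin l).rev : ℕ) = i := by
    simp only [Fin.val_rev]
    omega
  simpa only [rev_eq] using lll_all_coefficients_bound_general hδ.1 (by linarith [hδ.2]) hred hl hb₀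
    hγ' hvR.le ⟨l - 1 - i, by omega⟩
end
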